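/- Let G = (V,E) be a finite simple graph with n vertices and m edges having a dominating clique K of order k = |K| ≥ 3. If m ≥ 3(n−k) − 2 + k(k−1)/2, then G is 3-antimagic. -/

import Mathlib

open Finset

/-- A finite simple graph `G` with `m` edges is *`C`-antimagic* if there is an injective
labelling of its edges by labels in `{1, 2, …, m + C}` such that the vertex sums
`σ(u) = ∑_{v : uv ∈ E} f(uv)` are pairwise distinct. -/
def IsCAntimagic {V : Type*} [Fintype V] [DecidableEq V] (G : SimpleGraph V)
    [DecidableRel G.Adj] (C : ℕ) : Prop :=
  ∃ f : Sym2 V → ℕ,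
    Set.InjOn f ↑G.edgeFinset ∧
    (∀ e ∈ G.edgeFinset, f e ∈ Finset.Icc 1 (G.edgeFinset.card + C)) ∧
    Function.Injective fun u : V => ∑ v ∈ G.neighborFinset u, f s(u, v)

/-!
Write `K` for the clique, `O` for its complement and `D` for the set of edges not inside `K`. The
edges of `D` receive the labels `1, …, #D`. Each vertex of `O` has an edge to `K`; these private
edges are saved for the labels `1, 4, 7, …`, handed out in the order of the sums over the other
edges of `D`, so that the sums at `O` are at distance at least `3` from each other.

The edges inside `K` receive larger labels. Order `K` by the sums over `D` and treat its vertices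
one after the other, giving the edges to the later vertices one spare smaller label followed by a
run of new consecutive ones. Raising the last label by `0` or `1` keeps the sum at the treated
vertex away from the sums at `O`, and the number which is skipped, whichever it is, is the spare
label of the next vertex. The totals keep the order of the vertices, because the star at a later
vertex consists of larger labels. The edge left at the end has two endpoints to protect, and three
candidate labels are enough because the sums at `O` are `3`-spaced.
-/

/-! ### Spaced sets and sorted enumerations -/

/-- A set of natural numbers is *`d`-spaced* if distinct elements are at distance at least `d`.
The sums at the vertices outside the clique form such a set, which the sums inside must avoid. -/
def IsSpaced (d : ℕ) (S : Set ℕ) : Prop :=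
  ∀ ⦃s⦄, s ∈ S → ∀ ⦃t⦄, t ∈ S → s < t → s + d ≤ t

namespace IsSpaced

variable {c d : ℕ} {S : Set ℕ}

theorem mono (hS : IsSpaced d S) (hcd : c ≤ d) : IsSpaced c S :=
  fun _ hs _ ht hst => (Nat.add_le_add_left hcd _).trans (hS hs ht hst)

-- Each `s ∈ T` rules out at most one of the `d` candidates for `δ`.
theorem exists_lt_forall_add_notMem (hS : IsSpaced d S) (T : Finset ℕ) (hT : #T < d) :
    ∃ δ < d, ∀ s ∈ T, s + δ ∉ S := by
  by_contra! hcover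
  choose! s hsT hsS using hcover
  obtain ⟨δ, hδ, δ', hδ', hne, heq⟩ := exists_ne_map_eq_of_card_lt_of_maps_to
    (hT.trans_eq (card_range d).symm) fun δ hδ => hsT δ (mem_range.1 hδ)
  rw [mem_range] at hδ hδ'
  have hmem := hsS δ hδ
  have hmem' := hsS δ' hδ'
  rw [heq] at hmem
  rcases hne.lt_or_gt with hlt | hlt
  · have := hS hmem hmem' (by lia)
    lia
  · have := hS hmem' hmem (by lia)
    lia

end IsSpaced

theorem exists_equiv_fin_monotone {α β : Type*} [LinearOrder β] (A : Finset α) (w : α → β) :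
    ∃ e : Fin #A ≃ A, Monotone fun i => w (e i) :=
  ⟨(Tuple.sort fun i => w (A.equivFin.symm i)).trans A.equivFin.symm,
    Tuple.monotone_sort fun i => w (A.equivFin.symm i)⟩

/-! ### Vertex sums -/

section VertexSum

variable {V : Type*} [DecidableEq V]

/-- The sum of the labels `f e` over the edges `e ∈ E` incident to `u`. The edge set is a bare
`Finset (Sym2 V)`, so that a graph can be labelled one part of its edge set at a time. -/
def vertexSum (E : Finset (Sym2 V)) (f : Sym2 V → ℕ) (u : V) : ℕ :=
  ∑ e ∈ E with u ∈ e, f e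

variable {D E : Finset (Sym2 V)} {f g : Sym2 V → ℕ} {u : V}

theorem vertexSum_congr (h : ∀ e ∈ E, f e = g e) : vertexSum E f u = vertexSum E g u :=
  sum_congr rfl fun e he => h e (mem_filter.1 he).1

theorem vertexSum_sdiff_add_vertexSum (h : D ⊆ E) :
    vertexSum (E \ D) f u + vertexSum D f u = vertexSum E f u := by
  have hdisj : Disjoint {e ∈ E \ D | u ∈ e} {e ∈ D | u ∈ e} :=
    disjoint_filter_filter sdiff_disjoint
  rw [vertexSum, vertexSum, ← sum_union hdisj, ← filter_union, sdiff_union_of_subset h, vertexSum]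

theorem vertexSum_piecewise (h : D ⊆ E) (f g : Sym2 V → ℕ) (u : V) :
    vertexSum E (D.piecewise f g) u = vertexSum (E \ D) g u + vertexSum D f u := by
  rw [← vertexSum_sdiff_add_vertexSum h,
    vertexSum_congr fun e he => piecewise_eq_of_notMem D f g (mem_sdiff.1 he).2,
    vertexSum_congr fun e he => piecewise_eq_of_mem D f g he]

theorem vertexSum_eq_sum_mk {N : Finset V} (h : ∀ v, s(u, v) ∈ E ↔ v ∈ N) :
    vertexSum E f u = ∑ v ∈ N, f s(u, v) := by
  have hstar : {e ∈ E | u ∈ e} = N.image fun v => s(u, v) := by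
    ext e
    simp only [mem_filter, mem_image]
    constructor
    · rintro ⟨he, v, rfl⟩
      exact ⟨v, (h v).1 he, rfl⟩
    · rintro ⟨v, hv, rfl⟩
      exact ⟨(h v).2 hv, Sym2.mem_mk_left u v⟩
  rw [vertexSum, hstar, sum_image fun v _ w _ hvw => Sym2.congr_right.1 hvw]

theorem vertexSum_edgeFinset [Fintype V] (G : SimpleGraph V) [DecidableRel G.Adj] :
    vertexSum G.edgeFinset f u = ∑ v ∈ G.neighborFinset u, f s(u, v) :=
  vertexSum_eq_sum_mk (by simp)

end VertexSum

/-! ### Labelling the edges outside the clique -/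

theorem injOn_extend {ι α β : Type*} {φ : ι → α} {a : ι → β} {g : α → β} {s : Set α}
    (hφ : Function.Injective φ) (ha : Function.Injective a) (hg : Set.InjOn g (s \ Set.range φ))
    (hag : ∀ x ∈ s \ Set.range φ, ∀ i, g x ≠ a i) : Set.InjOn (Function.extend φ a g) s := by
  intro x hx y hy hxy
  by_cases hxφ : x ∈ Set.range φ <;> by_cases hyφ : y ∈ Set.range φ
  · obtain ⟨i, rfl⟩ := hxφ
    obtain ⟨j, rfl⟩ := hyφ
    rw [hφ.extend_apply, hφ.extend_apply] at hxy
    rw [ha hxy]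
  · obtain ⟨i, rfl⟩ := hxφ
    rw [hφ.extend_apply, Function.extend_apply' _ _ _ hyφ] at hxy
    exact absurd hxy.symm (hag y ⟨hy, hyφ⟩ i)
  · obtain ⟨j, rfl⟩ := hyφ
    rw [hφ.extend_apply, Function.extend_apply' _ _ _ hxφ] at hxy
    exact absurd hxy (hag x ⟨hx, hxφ⟩ j)
  · rw [Function.extend_apply' _ _ _ hxφ, Function.extend_apply' _ _ _ hyφ] at hxy
    exact hg ⟨hx, hxφ⟩ ⟨hy, hyφ⟩ hxy

theorem exists_injOn_Icc_avoiding_progression {α : Type*} {H : Finset α} {d r t : ℕ}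
    (hr : d * r < t + d) (hH : #H + r ≤ t) :
    ∃ g : α → ℕ, Set.InjOn g H ∧ ∀ x ∈ H, g x ∈ Icc 1 t ∧ ∀ i < r, g x ≠ d * i + 1 := by
  let P : Finset ℕ := (range r).image fun i => d * i + 1
  have hP : P ⊆ Icc 1 t := by
    simp only [P, image_subset_iff, mem_range, mem_Icc]
    intro i hi
    have : d * (i + 1) ≤ d * r := Nat.mul_le_mul_left d hi
    lia
  have hcardP : #P ≤ r := card_image_le.trans_eq (card_range r)
  have hcard : #H ≤ #(Icc 1 t \ P) := by
    rw [card_sdiff_of_subset hP, Nat.card_Icc]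
    lia
  obtain ⟨g, hg, hinj⟩ := H.finite_toSet.exists_injOn_of_encard_le
    (t := (↑(Icc 1 t \ P) : Set ℕ)) (by simpa only [Set.encard_coe_eq_coe_finsetCard,
      Nat.cast_le] using hcard)
  refine ⟨g, hinj, fun x hx => ?_⟩
  obtain ⟨hmem, hnotMem⟩ : g x ∈ Icc 1 t ∧ g x ∉ P := mem_sdiff.1 (hg hx)
  exact ⟨hmem, fun i hi h => hnotMem (mem_image.2 ⟨i, mem_range.2 hi, h.symm⟩)⟩

section PrivateEdges

variable {V : Type*} [DecidableEq V]

theorem vertexSum_image_of_mem_iff {ι : Type*} [Fintype ι] {φ : ι → Sym2 V}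
    {f : Sym2 V → ℕ} {u : V} {i : ι} (h : ∀ j, u ∈ φ j ↔ j = i) :
    vertexSum (univ.image φ) f u = f (φ i) := by
  have hfilter : {e ∈ univ.image φ | u ∈ e} = {φ i} := by
    ext e
    simp only [mem_filter, mem_image, mem_univ, true_and, mem_singleton]
    constructor
    · rintro ⟨⟨j, rfl⟩, hu⟩
      rw [(h j).1 hu]
    · rintro rfl
      exact ⟨⟨i, rfl⟩, (h i).2 rfl⟩
  rw [vertexSum, hfilter, sum_singleton]

theorem vertexSum_extend {ι : Type*} [Fintype ι] {φ : ι → Sym2 V} {a : ι → ℕ} {g : Sym2 V → ℕ}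
    {D : Finset (Sym2 V)} {u : V} {i : ι} (hφ : Function.Injective φ) (hφD : ∀ j, φ j ∈ D)
    (h : ∀ j, u ∈ φ j ↔ j = i) :
    vertexSum D (Function.extend φ a g) u = vertexSum (D \ univ.image φ) g u + a i := by
  have hsub : univ.image φ ⊆ D := image_subset_iff.2 fun j _ => hφD j
  have hrest : ∀ e ∈ D \ univ.image φ, Function.extend φ a g e = g e := fun e he =>
    Function.extend_apply' _ _ _ fun ⟨j, hj⟩ =>
      (mem_sdiff.1 he).2 (mem_image.2 ⟨j, mem_univ j, hj⟩)
  rw [← vertexSum_sdiff_add_vertexSum hsub, vertexSum_congr hrest, vertexSum_image_of_mem_iff h,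
    hφ.extend_apply]

variable {D : Finset (Sym2 V)} {O : Finset V} {d : ℕ}

theorem exists_labelling_add_le_vertexSum (hd : 0 < d) (hcard : d * #O < #D + d)
    (hprivate : ∀ v : O, ∃ e ∈ D, ∀ u : O, ↑u ∈ e ↔ u = v) :
    ∃ f : Sym2 V → ℕ, Set.InjOn f D ∧ (∀ e ∈ D, f e ∈ Icc 1 #D) ∧ ∃ v : Fin #O ≃ O,
      ∀ i j, i < j → vertexSum D f (v i) + d ≤ vertexSum D f (v j) := by
  choose priv hprivD hpriv using hprivate
  have hpriv_inj : Function.Injective priv := fun u v huv =>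
    (hpriv v u).1 (huv ▸ (hpriv u u).2 rfl)
  have hcard_rest : #(D \ univ.image priv) + #O ≤ #D := by
    rw [← Fintype.card_coe O, ← card_univ, ← card_image_of_injective _ hpriv_inj,
      card_sdiff_add_card_eq_card (image_subset_iff.2 fun v _ => hprivD v)]
  obtain ⟨g, hg_inj, hg⟩ := exists_injOn_Icc_avoiding_progression hcard hcard_rest
  obtain ⟨v, hv⟩ := exists_equiv_fin_monotone O (vertexSum (D \ univ.image priv) g)
  have hφ : Function.Injective (priv ∘ v) := hpriv_inj.comp v.injective
  have hrange : Set.range (priv ∘ v) = ↑(univ.image priv) := by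
    rw [v.surjective.range_comp, coe_image, coe_univ, Set.image_univ]
  have himage : univ.image (priv ∘ v) = univ.image priv :=
    coe_injective (by rw [← hrange, coe_image, coe_univ, Set.image_univ])
  have hφ_mem : ∀ i j, ↑(v i) ∈ (priv ∘ v) j ↔ j = i := fun i j => by
    rw [Function.comp_apply, hpriv, v.apply_eq_iff_eq, eq_comm]
  have hlabel : Function.Injective fun i : Fin #O => d * (i : ℕ) + 1 := fun i j hij =>
    Fin.ext (Nat.eq_of_mul_eq_mul_left hd (Nat.succ_injective hij))
  refine ⟨Function.extend (priv ∘ v) (fun i => d * i + 1) g, ?_, fun e he => ?_, v,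
    fun i j hij => ?_⟩
  · refine injOn_extend hφ hlabel ?_ ?_ <;> rw [hrange, ← coe_sdiff]
    · exact hg_inj
    · exact fun e he i => (hg e he).2 i i.2
  · by_cases hpe : e ∈ Set.range (priv ∘ v)
    · obtain ⟨i, rfl⟩ := hpe
      have : d * (i + 1) ≤ d * #O := Nat.mul_le_mul_left d i.2
      rw [hφ.extend_apply, mem_Icc]
      lia
    · rw [Function.extend_apply' _ _ _ hpe]
      exact (hg e (mem_sdiff.2 ⟨he, fun h => hpe (hrange ▸ h)⟩)).1
  · have hsum := hv hij.le
    have hstep : d * (i + 1) ≤ d * j := Nat.mul_le_mul_left d hij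
    simp only [vertexSum_extend hφ (fun _ => hprivD _) (hφ_mem _), himage] at hsum ⊢
    lia

theorem exists_labelling_isSpaced_vertexSum (hd : 0 < d) (hcard : d * #O < #D + d)
    (hprivate : ∀ v : O, ∃ e ∈ D, ∀ u : O, ↑u ∈ e ↔ u = v) :
    ∃ f : Sym2 V → ℕ, Set.InjOn f D ∧ (∀ e ∈ D, f e ∈ Icc 1 #D) ∧
      Set.InjOn (vertexSum D f) O ∧ IsSpaced d (vertexSum D f '' O) := by
  obtain ⟨f, hf_inj, hf, v, hv⟩ := exists_labelling_add_le_vertexSum hd hcard hprivate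
  have hmono : StrictMono fun i => vertexSum D f (v i) := fun i j hij => by
    have := hv i j hij
    dsimp only
    lia
  have hrange : ∀ u ∈ O, ∃ i, ↑(v i) = u := fun u hu => ⟨v.symm ⟨u, hu⟩, by simp⟩
  refine ⟨f, hf_inj, hf, fun u hu w hw huw => ?_, ?_⟩
  · obtain ⟨i, rfl⟩ := hrange u hu
    obtain ⟨j, rfl⟩ := hrange w hw
    rw [hmono.injective huw]
  · rintro _ ⟨u, hu, rfl⟩ _ ⟨w, hw, rfl⟩ huw
    obtain ⟨i, rfl⟩ := hrange u hu
    obtain ⟨j, rfl⟩ := hrange w hw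
    exact hv i j (hmono.lt_iff_lt.1 huw)

end PrivateEdges

/-! ### Labelling a complete graph on `Fin k` -/

/-- Edge labels of the complete graph on `Fin (n + 1)`, as a symmetric array with zero diagonal,
obtained from such an array `g` on the vertices `1, …, n` by giving the edge from `0` to `i + 1`
the label `r i`. -/
def consLabels {n : ℕ} (r : Fin n → ℕ) (g : Fin n → Fin n → ℕ) : Fin (n + 1) → Fin (n + 1) → ℕ :=
  Fin.cons (Fin.cons 0 r) fun i => Fin.cons (r i) (g i)

section ConsLabels

variable {n : ℕ} {r : Fin n → ℕ} {g : Fin n → Fin n → ℕ} {i j : Fin n}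

@[simp]
theorem consLabels_zero_zero : consLabels r g 0 0 = 0 := rfl

@[simp]
theorem consLabels_zero_succ : consLabels r g 0 i.succ = r i := rfl

@[simp]
theorem consLabels_succ_zero : consLabels r g i.succ 0 = r i := rfl

@[simp]
theorem consLabels_succ_succ : consLabels r g i.succ j.succ = g i j := rfl

theorem sum_consLabels_zero : ∑ j, consLabels r g 0 j = ∑ j, r j := by
  simp [Fin.sum_univ_succ]

theorem sum_consLabels_succ : ∑ j, consLabels r g i.succ j = r i + ∑ j, g i j := by
  simp [Fin.sum_univ_succ]

theorem add_sum_consLabels (p : Fin (n + 1) → ℕ) :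
    (fun i => p i + ∑ j, consLabels r g i j) =
      Matrix.vecCons (p 0 + ∑ j, r j) fun i => p i.succ + r i + ∑ j, g i j := by
  funext i
  cases i using Fin.cases with
  | zero => exact congrArg _ sum_consLabels_zero
  | succ i => exact (congrArg _ sum_consLabels_succ).trans (add_assoc _ _ _).symm

theorem consLabels_inj (hr : Function.Injective r)
    (hg : ∀ ⦃i j i' j'⦄, i < j → i' < j' → g i j = g i' j' → i = i' ∧ j = j')
    (hrg : ∀ l ⦃i j⦄, i < j → r l ≠ g i j) ⦃i j i' j' : Fin (n + 1)⦄ (hij : i < j)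
    (hij' : i' < j') (h : consLabels r g i j = consLabels r g i' j') : i = i' ∧ j = j' := by
  obtain ⟨j, rfl⟩ := Fin.exists_succ_eq.2 (Fin.ne_zero_of_lt hij)
  obtain ⟨j', rfl⟩ := Fin.exists_succ_eq.2 (Fin.ne_zero_of_lt hij')
  cases i using Fin.cases <;> cases i' using Fin.cases
  · exact ⟨rfl, congrArg Fin.succ (hr h)⟩
  · exact absurd h (hrg _ (Fin.succ_lt_succ_iff.1 hij'))
  · exact absurd h.symm (hrg _ (Fin.succ_lt_succ_iff.1 hij))
  · simpa only [Fin.succ_inj] using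
      hg (Fin.succ_lt_succ_iff.1 hij) (Fin.succ_lt_succ_iff.1 hij') h

end ConsLabels

/-- Labels for the edges from `0` to the other vertices `1, …, n + 2`: the spare label `a`
followed by the run `b, …, b + n`, the last term of which is raised by `ε`. -/
def starLabels (n a b ε : ℕ) (i : Fin (n + 2)) : ℕ :=
  (if i = 0 then a else b + i - 1) + if i = Fin.last (n + 1) then ε else 0

section StarLabels

variable {n a b ε : ℕ}

theorem sum_starLabels : ∑ i, starLabels n a b ε i = ∑ i, starLabels n a b 0 i + ε := by
  simp [starLabels, sum_add_distrib]

theorem starLabels_zero : starLabels n a b ε 0 = a := by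
  simp [starLabels, Fin.ext_iff]

theorem starLabels_last : starLabels n a b ε (Fin.last (n + 1)) = b + n + ε := by
  simp [starLabels, Fin.ext_iff]

theorem starLabels_strictMono (hab : a < b) : StrictMono (starLabels n a b ε) := by
  intro i j hij
  simp only [starLabels, Fin.ext_iff, Fin.lt_def, Fin.val_zero, Fin.val_last] at *
  split_ifs <;> lia

theorem starLabels_eq_or_le (i : Fin (n + 2)) :
    starLabels n a b ε i = a ∨ b ≤ starLabels n a b ε i := by
  by_cases hi : i = 0
  · exact .inl (hi ▸ starLabels_zero)
  · simp only [starLabels, hi, if_false]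
    lia

theorem starLabels_lt_of_ne_last {i : Fin (n + 2)} (hab : a < b) (hi : i ≠ Fin.last (n + 1)) :
    starLabels n a b ε i < b + n := by
  have := Fin.val_lt_last hi
  simp only [starLabels, hi, if_false]
  split_ifs <;> lia

end StarLabels

/-- The array `g` gives distinct labels to the edges of the complete graph on `Fin (n + 2)`, all of
them equal to `a` or in `[b, b + (n + 2).choose 2 + 1]`, such that adding the vertex sums to the
initial weights `p` gives strictly increasing totals which avoid `S`. The edge from `0` to the
last vertex does not carry the spare label `a`; this keeps its label above every label of the star
at a vertex added in front. -/
structure IsAvoidingLabelling (S : Set ℕ) (a b : ℕ) {n : ℕ} (p : Fin (n + 2) → ℕ)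
    (g : Fin (n + 2) → Fin (n + 2) → ℕ) : Prop where
  diag : ∀ i, g i i = 0
  symm : ∀ i j, g i j = g j i
  inj : ∀ ⦃i j i' j'⦄, i < j → i' < j' → g i j = g i' j' → i = i' ∧ j = j'
  eq_or_le : ∀ ⦃i j⦄, i < j → g i j = a ∨ b ≤ g i j
  le : ∀ ⦃i j⦄, i < j → g i j ≤ b + (n + 2).choose 2 + 1
  le_zero_last : b ≤ g 0 (Fin.last (n + 1))
  strictMono : StrictMono fun i => p i + ∑ j, g i j
  notMem : ∀ i, p i + ∑ j, g i j ∉ S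

theorem exists_isAvoidingLabelling_two {S : Set ℕ} (hS : IsSpaced 3 S) {p : Fin 2 → ℕ}
    (hp : StrictMono p) (a b : ℕ) : ∃ g, IsAvoidingLabelling S a b p g := by
  obtain ⟨δ, hδ, hδS⟩ := hS.exists_lt_forall_add_notMem {p 0 + b, p 1 + b}
    (card_le_two.trans_lt (by norm_num))
  simp only [mem_insert, mem_singleton, forall_eq_or_imp, forall_eq, add_assoc] at hδS
  have hp01 : p 0 < p 1 := hp Fin.zero_lt_one
  have hle : b + δ ≤ b + 1 + 1 := by lia
  refine ⟨!![0, b + δ; b + δ, 0], ?_, ?_, ?_, ?_, ?_, ?_, ?_, ?_⟩ <;>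
    simp [Fin.forall_fin_two, Fin.strictMono_iff_lt_succ, hδS, hp01, hle]

namespace IsAvoidingLabelling

variable {S : Set ℕ} {n a b ε : ℕ} {p : Fin (n + 2) → ℕ}
  {g : Fin (n + 2) → Fin (n + 2) → ℕ}

theorem starLabels_ne (hg : IsAvoidingLabelling S (b + n + 1 - ε) (b + n + 2) p g)
    (hab : a < b) (hε : ε ≤ 1) (l : Fin (n + 2)) {i j : Fin (n + 2)} (hij : i < j) :
    starLabels n a b ε l ≠ g i j := by
  have := hg.eq_or_le hij
  by_cases hl : l = Fin.last (n + 1)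
  · rw [hl, starLabels_last]
    lia
  · have := starLabels_lt_of_ne_last (ε := ε) hab hl
    lia

theorem starLabels_succ_lt (hg : IsAvoidingLabelling S (b + n + 1 - ε) (b + n + 2) p g)
    (hab : a < b) (hε : ε ≤ 1) (i : Fin (n + 1)) :
    starLabels n a b ε i.succ < g 0 i.succ := by
  have hle := hg.eq_or_le i.succ_pos
  by_cases hi : i = Fin.last n
  · have := hg.le_zero_last
    rw [hi, Fin.succ_last, starLabels_last]
    lia
  · have hsucc : i.succ ≠ Fin.last (n + 1) := by rwa [ne_eq, ← Fin.succ_last, Fin.succ_inj]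
    have := starLabels_lt_of_ne_last (ε := ε) hab hsucc
    lia

theorem sum_starLabels_lt (hg : IsAvoidingLabelling S (b + n + 1 - ε) (b + n + 2) p g)
    (hab : a < b) (hε : ε ≤ 1) :
    ∑ i, starLabels n a b ε i < starLabels n a b ε 0 + ∑ j, g 0 j := by
  rw [Fin.sum_univ_succ, Fin.sum_univ_succ (g 0), hg.diag, zero_add]
  exact Nat.add_lt_add_left
    (sum_lt_sum_of_nonempty univ_nonempty fun i _ => hg.starLabels_succ_lt hab hε i) _

theorem cons {p : Fin (n + 3) → ℕ} (hp : Monotone p) (hab : a < b) (hε : ε ≤ 1)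
    (hpS : p 0 + ∑ i, starLabels n a b ε i ∉ S)
    (hg : IsAvoidingLabelling S (b + n + 1 - ε) (b + n + 2)
      (fun i => p i.succ + starLabels n a b ε i) g) :
    IsAvoidingLabelling S a b p (consLabels (starLabels n a b ε) g) where
  diag := by simp [Fin.forall_fin_succ (n := n + 2), hg.diag]
  symm i j := by cases i using Fin.cases <;> cases j using Fin.cases <;> simp [hg.symm]
  inj := consLabels_inj (starLabels_strictMono hab).injective hg.inj fun l _ _ hij =>
    hg.starLabels_ne hab hε l hij
  eq_or_le i j hij := by
    obtain ⟨j, rfl⟩ := Fin.exists_succ_eq.2 (Fin.ne_zero_of_lt hij)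
    cases i using Fin.cases with
    | zero => exact starLabels_eq_or_le j
    | succ i =>
      have := hg.eq_or_le (Fin.succ_lt_succ_iff.1 hij)
      rw [consLabels_succ_succ]
      lia
  le i j hij := by
    have hchoose : (n + 3).choose 2 = n + 2 + (n + 2).choose 2 := by
      rw [Nat.choose_succ_succ', Nat.choose_one_right]
    obtain ⟨j, rfl⟩ := Fin.exists_succ_eq.2 (Fin.ne_zero_of_lt hij)
    cases i using Fin.cases with
    | zero =>
      have := (starLabels_strictMono (ε := ε) hab).monotone j.le_last
      rw [starLabels_last] at this
      rw [consLabels_zero_succ]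
      lia
    | succ i =>
      have := hg.le (Fin.succ_lt_succ_iff.1 hij)
      rw [consLabels_succ_succ]
      lia
  le_zero_last := by
    rw [← Fin.succ_last, consLabels_zero_succ, starLabels_last]
    lia
  strictMono := by
    rw [add_sum_consLabels, strictMono_vecCons, add_assoc (p _)]
    exact ⟨add_lt_add_of_le_of_lt (hp (Fin.zero_le _)) (hg.sum_starLabels_lt hab hε),
      hg.strictMono⟩
  notMem i := by
    cases i using Fin.cases with
    | zero => rwa [sum_consLabels_zero]
    | succ i => simpa only [sum_consLabels_succ, add_assoc] using hg.notMem i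

end IsAvoidingLabelling

section Existence

variable {S : Set ℕ} {n a b : ℕ}

theorem exists_isAvoidingLabelling_succ (hS : IsSpaced 3 S) {p : Fin (n + 3) → ℕ}
    (hp : Monotone p) (hab : a < b)
    (ih : ∀ (q : Fin (n + 2) → ℕ) (a' b' : ℕ), StrictMono q → a' < b' →
      ∃ g, IsAvoidingLabelling S a' b' q g) :
    ∃ g, IsAvoidingLabelling S a b p g := by
  obtain ⟨ε, hε, hεS⟩ : ∃ ε < 2, p 0 + ∑ i, starLabels n a b ε i ∉ S := by
    simpa only [mem_singleton, forall_eq, add_assoc, ← sum_starLabels] using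
      (hS.mono (Nat.le_succ 2)).exists_lt_forall_add_notMem {p 0 + ∑ i, starLabels n a b 0 i}
        (by simp)
  have hq : StrictMono fun i : Fin (n + 2) => p i.succ + starLabels n a b ε i :=
    (hp.comp Fin.strictMono_succ.monotone).add_strictMono (starLabels_strictMono hab)
  obtain ⟨g, hg⟩ := ih _ (b + n + 1 - ε) (b + n + 2) hq (by lia)
  exact ⟨_, hg.cons hp hab (Nat.le_of_lt_succ hε) hεS⟩

theorem exists_isAvoidingLabelling_of_strictMono (hS : IsSpaced 3 S) {p : Fin (n + 2) → ℕ}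
    (hp : StrictMono p) (hab : a < b) : ∃ g, IsAvoidingLabelling S a b p g := by
  induction n generalizing a b with
  | zero => exact exists_isAvoidingLabelling_two hS hp a b
  | succ n ih =>
    exact exists_isAvoidingLabelling_succ hS hp.monotone hab fun _ _ _ hq hab' => ih hq hab'

-- Adding the star labels at the first vertex makes the remaining weights strictly increasing.
theorem exists_isAvoidingLabelling_of_monotone (hS : IsSpaced 3 S) {p : Fin (n + 3) → ℕ}
    (hp : Monotone p) (hab : a < b) : ∃ g, IsAvoidingLabelling S a b p g :=
  exists_isAvoidingLabelling_succ hS hp hab fun _ _ _ hq hab' =>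
    exists_isAvoidingLabelling_of_strictMono hS hq hab'

end Existence

/-! ### Labelling a clique -/

section CliqueEdges

variable {V : Type*} [DecidableEq V] {K : Finset V}

/-- The edges of the complete graph with vertex set `K`, as unordered pairs in the ambient type, so
that they can be removed from the edge set of a graph containing `K` as a clique. -/
def cliqueEdges (K : Finset V) : Finset (Sym2 V) :=
  K.offDiag.image Sym2.mk.uncurry

theorem mk_mem_cliqueEdges {x y : V} : s(x, y) ∈ cliqueEdges K ↔ x ∈ K ∧ y ∈ K ∧ x ≠ y := by
  simp only [cliqueEdges, mem_image, mem_offDiag, Prod.exists, Function.uncurry_apply_pair]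
  constructor
  · rintro ⟨a, b, ⟨ha, hb, hab⟩, h⟩
    rcases Sym2.eq_iff.1 h with ⟨rfl, rfl⟩ | ⟨rfl, rfl⟩
    · exact ⟨ha, hb, hab⟩
    · exact ⟨hb, ha, hab.symm⟩
  · exact fun h => ⟨x, y, h, rfl⟩

theorem card_cliqueEdges : #(cliqueEdges K) = (#K).choose 2 :=
  Sym2.card_image_offDiag K

theorem vertexSum_cliqueEdges_of_notMem {f : Sym2 V → ℕ} {u : V} (hu : u ∉ K) :
    vertexSum (cliqueEdges K) f u = 0 := by
  rw [vertexSum_eq_sum_mk (N := ∅), sum_empty]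
  simp [mk_mem_cliqueEdges, hu]

theorem vertexSum_cliqueEdges_equiv {α : Type*} [Fintype α] [DecidableEq α] (v : α ≃ K)
    {f : Sym2 V → ℕ} (i : α) :
    vertexSum (cliqueEdges K) f (v i) = ∑ j ∈ univ.erase i, f s(↑(v i), ↑(v j)) := by
  have hv : Function.Injective fun j => (v j : V) := Subtype.val_injective.comp v.injective
  rw [vertexSum_eq_sum_mk (N := (univ.erase i).image fun j => (v j : V)), sum_image hv.injOn]
  intro x
  simp only [mk_mem_cliqueEdges, mem_image, mem_erase, mem_univ, and_true]
  constructor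
  · rintro ⟨-, hx, hne⟩
    exact ⟨v.symm ⟨x, hx⟩, by rintro rfl; simp at hne, by simp⟩
  · rintro ⟨j, hji, rfl⟩
    exact ⟨(v i).2, (v j).2, hv.ne hji.symm⟩

theorem exists_lt_of_mem_cliqueEdges {α : Type*} [LinearOrder α] (v : α ≃ K) {e : Sym2 V}
    (he : e ∈ cliqueEdges K) : ∃ i j, i < j ∧ s(↑(v i), ↑(v j)) = e := by
  induction e using Sym2.ind with | _ x y
  obtain ⟨hx, hy, hxy⟩ := mk_mem_cliqueEdges.1 he
  have hne : v.symm ⟨x, hx⟩ ≠ v.symm ⟨y, hy⟩ := v.symm.injective.ne (by simpa using hxy)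
  rcases hne.lt_or_gt with hlt | hlt
  · exact ⟨_, _, hlt, by simp⟩
  · exact ⟨_, _, hlt, by simp [Sym2.eq_swap]⟩

theorem exists_cliqueEdges_labelling {S : Set ℕ} (hS : IsSpaced 3 S) (hK : 3 ≤ #K) (p : V → ℕ)
    (t : ℕ) :
    ∃ f : Sym2 V → ℕ, Set.InjOn f (cliqueEdges K) ∧
      (∀ e ∈ cliqueEdges K, f e ∈ Icc (t + 1) (t + #(cliqueEdges K) + 3)) ∧
      Set.InjOn (fun u => p u + vertexSum (cliqueEdges K) f u) K ∧
      ∀ u ∈ K, p u + vertexSum (cliqueEdges K) f u ∉ S := by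
  obtain ⟨n, hn⟩ : ∃ n, #K = n + 3 := Nat.exists_eq_add_of_le' hK
  obtain ⟨v, hv⟩ : ∃ v : Fin (n + 3) ≃ K, Monotone fun i => p (v i) :=
    hn ▸ exists_equiv_fin_monotone K p
  obtain ⟨g, hg⟩ := exists_isAvoidingLabelling_of_monotone hS hv (Nat.lt_succ_self (t + 1))
  let f : Sym2 V → ℕ :=
    Function.extend (Sym2.map fun i => (v i : V)) (Sym2.lift ⟨g, hg.symm⟩) 0
  have hf : ∀ i j, f s(↑(v i), ↑(v j)) = g i j := fun i j =>
    (Sym2.map.injective (Subtype.val_injective.comp v.injective)).extend_apply _ _ s(i, j)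
  have htotal : ∀ i, p (v i) + vertexSum (cliqueEdges K) f (v i) = p (v i) + ∑ j, g i j := by
    intro i
    rw [vertexSum_cliqueEdges_equiv, sum_congr rfl fun j _ => hf i j, sum_erase _ (hg.diag i)]
  have hrange : ∀ u ∈ K, ∃ i, ↑(v i) = u := fun u hu => ⟨v.symm ⟨u, hu⟩, by simp⟩
  refine ⟨f, fun e he e' he' h => ?_, fun e he => ?_, fun u hu w hw h => ?_, fun u hu => ?_⟩
  · obtain ⟨i, j, hij, rfl⟩ := exists_lt_of_mem_cliqueEdges v he
    obtain ⟨i', j', hij', rfl⟩ := exists_lt_of_mem_cliqueEdges v he'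
    rw [hf, hf] at h
    obtain ⟨rfl, rfl⟩ := hg.inj hij hij' h
    rfl
  · obtain ⟨i, j, hij, rfl⟩ := exists_lt_of_mem_cliqueEdges v he
    have := hg.eq_or_le hij
    have := hg.le hij
    rw [hf, mem_Icc, card_cliqueEdges, hn]
    lia
  · obtain ⟨i, rfl⟩ := hrange u hu
    obtain ⟨j, rfl⟩ := hrange w hw
    simp only [htotal] at h
    rw [hg.strictMono.injective h]
  · obtain ⟨i, rfl⟩ := hrange u hu
    exact htotal i ▸ hg.notMem i

end CliqueEdges

/-! ### Combining the two labellings -/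

theorem injOn_piecewise_of_le_of_lt {α : Type*} [DecidableEq α] {D E : Finset α} {f g : α → ℕ}
    {t : ℕ} (hf : Set.InjOn f D) (hg : Set.InjOn g (E \ D : Finset α))
    (hgt : ∀ x ∈ E \ D, g x ≤ t) (hft : ∀ x ∈ D, t < f x) : Set.InjOn (D.piecewise f g) E := by
  intro x hx y hy hxy
  have hmem : ∀ z ∈ E, z ∉ D → z ∈ E \ D := fun z hz hzD => mem_sdiff.2 ⟨hz, hzD⟩
  by_cases hxD : x ∈ D <;> by_cases hyD : y ∈ D <;>
    simp only [hxD, hyD, not_false_eq_true, piecewise_eq_of_mem, piecewise_eq_of_notMem] at hxy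
  · exact hf hxD hyD hxy
  · exact absurd hxy ((hgt y (hmem y hy hyD)).trans_lt (hft x hxD)).ne'
  · exact absurd hxy ((hgt x (hmem x hx hxD)).trans_lt (hft y hyD)).ne
  · exact hg (hmem x hx hxD) (hmem y hy hyD) hxy

theorem injective_of_injOn_compl {α β : Type*} [Fintype α] [DecidableEq α] {s : Finset α}
    {f : α → β} (hs : Set.InjOn f s) (hsc : Set.InjOn f (sᶜ : Finset α))
    (h : ∀ x ∈ s, f x ∉ f '' (sᶜ : Finset α)) :
    Function.Injective f := by
  rw [← Set.injOn_univ, ← Set.union_compl_self (s : Set α), Set.injOn_union disjoint_compl_right,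
    ← coe_compl]
  exact ⟨hs, hsc, fun x hx y hy hxy => h x hx ⟨y, hy, hxy.symm⟩⟩

section Combination

variable {V : Type*} [Fintype V] [DecidableEq V] {G : SimpleGraph V} [DecidableRel G.Adj]
  {K : Finset V}

theorem cliqueEdges_subset_edgeFinset (hK : G.IsClique (K : Set V)) :
    cliqueEdges K ⊆ G.edgeFinset := by
  intro e
  induction e using Sym2.ind with | _ x y
  rw [mk_mem_cliqueEdges, SimpleGraph.mem_edgeFinset, SimpleGraph.mem_edgeSet]
  exact fun ⟨hx, hy, hxy⟩ => hK hx hy hxy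

theorem exists_private_edge (hdom : ∀ v ∉ K, ∃ u ∈ K, G.Adj v u) (v : (Kᶜ : Finset V)) :
    ∃ e ∈ G.edgeFinset \ cliqueEdges K, ∀ u : (Kᶜ : Finset V), ↑u ∈ e ↔ u = v := by
  have hvK : ↑v ∉ K := mem_compl.1 v.2
  obtain ⟨w, hw, hvw⟩ := hdom v hvK
  refine ⟨s(↑v, w), ?_, fun u => ?_⟩
  · simp [mk_mem_cliqueEdges, hvK, hvw]
  · have huw : (u : V) ≠ w := fun h => mem_compl.1 u.2 (h ▸ hw)
    rw [Sym2.mem_iff, or_iff_left huw, Subtype.coe_inj]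

theorem three_mul_card_compl_lt (hclique : G.IsClique (K : Set V))
    (hm : 3 * ((Fintype.card V : ℤ) - #K) - 2 + #K * (#K - 1) / 2 ≤ (#G.edgeFinset : ℤ)) :
    3 * #Kᶜ < #(G.edgeFinset \ cliqueEdges K) + 3 := by
  have hchoose : (#K : ℤ) * (#K - 1) / 2 = #(cliqueEdges K) := by
    rw [card_cliqueEdges, Nat.choose_two_right]
    cases #K <;> simp
  have hsplit := card_sdiff_add_card_eq_card (cliqueEdges_subset_edgeFinset hclique)
  have hcompl := card_compl_add_card K
  lia

theorem isCAntimagic_of_piecewise {C : ℕ} {f g : Sym2 V → ℕ} {D : Finset (Sym2 V)}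
    (hD : D ⊆ G.edgeFinset) (hf_inj : Set.InjOn f D)
    (hg_inj : Set.InjOn g (G.edgeFinset \ D : Finset (Sym2 V)))
    (hg : ∀ e ∈ G.edgeFinset \ D, g e ∈ Icc 1 #(G.edgeFinset \ D))
    (hf : ∀ e ∈ D, f e ∈ Icc (#(G.edgeFinset \ D) + 1) (#(G.edgeFinset \ D) + #D + C))
    (hsum : Function.Injective fun u => vertexSum (G.edgeFinset \ D) g u + vertexSum D f u) :
    IsCAntimagic G C := by
  have hcard := card_sdiff_add_card_eq_card hD
  refine ⟨D.piecewise f g, ?_, fun e he => ?_, ?_⟩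
  · exact injOn_piecewise_of_le_of_lt hf_inj hg_inj (fun e he => (mem_Icc.1 (hg e he)).2)
      fun e he => (mem_Icc.1 (hf e he)).1
  · by_cases heD : e ∈ D
    · have := mem_Icc.1 (hf e heD)
      rw [piecewise_eq_of_mem _ _ _ heD, mem_Icc]
      lia
    · have := mem_Icc.1 (hg e (mem_sdiff.2 ⟨he, heD⟩))
      rw [piecewise_eq_of_notMem _ _ _ heD, mem_Icc]
      lia
  · simpa only [← vertexSum_edgeFinset, vertexSum_piecewise hD] using hsum

end Combination

/-- If a graph `G` with `n` vertices and `m` edges has a dominating clique `K` of order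
`k ≥ 3` and `m ≥ 3(n - k) - 2 + k(k-1)/2`, then `G` is `3`-antimagic. -/
theorem three_antimagic_of_dominating_clique {V : Type*} [Fintype V] [DecidableEq V]
    (G : SimpleGraph V) [DecidableRel G.Adj] (K : Finset V)
    (hclique : G.IsClique ↑K) (hcard : 3 ≤ K.card)
    (hdom : ∀ v ∉ K, ∃ u ∈ K, G.Adj v u)
    (hm : 3 * ((Fintype.card V : ℤ) - K.card) - 2 + K.card * (K.card - 1) / 2
        ≤ (G.edgeFinset.card : ℤ)) :
    IsCAntimagic G 3 := by
  obtain ⟨g, hg_inj, hg, hg_sum, hS⟩ := exists_labelling_isSpaced_vertexSum three_pos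
    (three_mul_card_compl_lt hclique hm) (exists_private_edge hdom)
  obtain ⟨f, hf_inj, hf, hf_sum, hf_notMem⟩ := exists_cliqueEdges_labelling hS hcard
    (vertexSum (G.edgeFinset \ cliqueEdges K) g) #(G.edgeFinset \ cliqueEdges K)
  have hsum_compl : Set.EqOn
      (fun u => vertexSum (G.edgeFinset \ cliqueEdges K) g u + vertexSum (cliqueEdges K) f u)
      (vertexSum (G.edgeFinset \ cliqueEdges K) g) (Kᶜ : Finset V) := fun u hu => by
    simp only [vertexSum_cliqueEdges_of_notMem (mem_compl.1 hu), add_zero]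
  refine isCAntimagic_of_piecewise (cliqueEdges_subset_edgeFinset hclique) hf_inj hg_inj hg hf
    (injective_of_injOn_compl hf_sum (hsum_compl.injOn_iff.2 hg_sum) ?_)
  rwa [hsum_compl.image_eq]
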